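/- Let p be a positive integer, μ ∈ ℝ^p, Σ a real symmetric positive definite p×p matrix, S a real diagonal positive semidefinite p×p matrix with 2Σ − S positive semidefinite, and L a real p×p matrix with L Lᵀ = 2S − S Σ⁻¹ S. Let X be a random vector in ℝ^p with the multivariate Gaussian distribution of mean μ and covariance Σ, and U an independent standard Gaussian random vector in ℝ^p. Define X̃ = μ + (I − SΣ⁻¹)(X − μ) + L U. Then for every subset A ⊆ {1, …, p}, the random vector (X, X̃)_{swap(A)}, obtained from (X, X̃) by exchanging the j-th and (p+j)-th coordinates for every j ∈ A, has the same distribution as (X, X̃). -/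

import Mathlib

open MeasureTheory Matrix

/-- `ν` is the multivariate Gaussian measure on `ℝ^d` (modelled as `d → ℝ`) with mean
vector `m` and covariance matrix `G`, characterized (Cramér–Wold) by the requirement
that every linear functional `x ↦ ∑ i, a i * x i` pushes `ν` forward to the real
Gaussian with mean `⟪a, m⟫` and variance `aᵀ G a`. -/
def IsMultivariateGaussian {d : Type*} [Fintype d] (ν : Measure (d → ℝ))
    (m : d → ℝ) (G : Matrix d d ℝ) : Prop :=
  IsProbabilityMeasure ν ∧
    ∀ a : d → ℝ,
      Measure.map (fun x => ∑ i, a i * x i) ν =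
        ProbabilityTheory.gaussianReal (∑ i, a i * m i)
          (Real.toNNReal (a ⬝ᵥ G.mulVec a))

/-- The coordinate-swap map on `Fin p ⊕ Fin p` exchanging coordinate `j` with
coordinate `p + j` for every `j ∈ A` and fixing all other coordinates. -/
def knockoffSwapFun {p : ℕ} (A : Finset (Fin p)) : Fin p ⊕ Fin p → Fin p ⊕ Fin p
  | .inl j => if j ∈ A then .inr j else .inl j
  | .inr j => if j ∈ A then .inl j else .inr j

/-- The quadratic-form identity behind the covariance of `(X, X̃)`. -/
theorem knockoff_quad {p : ℕ} (Sig S L : Matrix (Fin p) (Fin p) ℝ)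
    (hSig : Sig.PosDef) (hSpsd : S.PosSemidef)
    (hL : L * Lᵀ = (2 : ℝ) • S - S * Sig⁻¹ * S) (a b : Fin p → ℝ) :
    (a + b ᵥ* (1 - S * Sig⁻¹)) ⬝ᵥ Sig *ᵥ (a + b ᵥ* (1 - S * Sig⁻¹)) + (b ᵥ* L) ⬝ᵥ (b ᵥ* L)
      = (a + b) ⬝ᵥ Sig *ᵥ (a + b) - 2 * (a ⬝ᵥ S *ᵥ b) := by
  have hSt : Sigᵀ = Sig := by simpa using hSig.isHermitian.eq
  have hSS : Sᵀ = S := by simpa using hSpsd.isHermitian.eq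
  have hdet : IsUnit Sig.det := hSig.det_pos.ne'.isUnit
  have hSR : Sig * Sig⁻¹ = 1 := Matrix.mul_nonsing_inv _ hdet
  have hRt : (Sig⁻¹)ᵀ = Sig⁻¹ := by rw [Matrix.transpose_nonsing_inv, hSt]
  have symS : ∀ x y : Fin p → ℝ, x ⬝ᵥ Sig *ᵥ y = y ⬝ᵥ Sig *ᵥ x := fun x y => by
    rw [dotProduct_comm, ← Matrix.vecMul_transpose, hSt, ← Matrix.dotProduct_mulVec]
  have hw : b ᵥ* (1 - S * Sig⁻¹) = b - Sig⁻¹ *ᵥ (S *ᵥ b) := by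
    rw [Matrix.vecMul_sub, Matrix.vecMul_one, ← Matrix.mulVec_transpose, Matrix.transpose_mul,
      hRt, hSS, Matrix.mulVec_mulVec]
  have hSw : Sig *ᵥ (b - Sig⁻¹ *ᵥ (S *ᵥ b)) = Sig *ᵥ b - S *ᵥ b := by
    rw [Matrix.mulVec_sub, Matrix.mulVec_mulVec, hSR, Matrix.one_mulVec]
  have hd : (b ᵥ* L) ⬝ᵥ (b ᵥ* L) = 2 * (b ⬝ᵥ S *ᵥ b) - (S *ᵥ b) ⬝ᵥ (Sig⁻¹ *ᵥ (S *ᵥ b)) := by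
    rw [← Matrix.dotProduct_mulVec, ← Matrix.mulVec_transpose, Matrix.mulVec_mulVec, hL,
      Matrix.sub_mulVec, dotProduct_sub, Matrix.smul_mulVec, dotProduct_smul, smul_eq_mul]
    congr 1
    rw [← Matrix.mulVec_mulVec, ← Matrix.mulVec_mulVec, Matrix.dotProduct_mulVec b S,
      ← Matrix.mulVec_transpose, hSS]
  have h1 : (Sig⁻¹ *ᵥ (S *ᵥ b)) ⬝ᵥ Sig *ᵥ b = b ⬝ᵥ S *ᵥ b := by
    rw [symS, Matrix.mulVec_mulVec, hSR, Matrix.one_mulVec]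
  have h2 : (b - Sig⁻¹ *ᵥ (S *ᵥ b)) ⬝ᵥ Sig *ᵥ a = a ⬝ᵥ Sig *ᵥ b - a ⬝ᵥ S *ᵥ b := by
    rw [symS, hSw, dotProduct_sub]
  rw [hd, hw, Matrix.mulVec_add, add_dotProduct, dotProduct_add, dotProduct_add, h2, hSw,
    Matrix.mulVec_add, add_dotProduct, dotProduct_add, dotProduct_add, symS b a,
    dotProduct_sub, sub_dotProduct, dotProduct_sub, dotProduct_sub, h1,
    dotProduct_comm (S *ᵥ b)]
  ring

/-- Law of an arbitrary linear functional of `(X, X̃)`. -/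
theorem knockoff_law {p : ℕ}
    (μ : Fin p → ℝ) (Sig S L : Matrix (Fin p) (Fin p) ℝ)
    (hSig : Sig.PosDef) (hSpsd : S.PosSemidef)
    (hL : L * Lᵀ = (2 : ℝ) • S - S * Sig⁻¹ * S)
    {Ω : Type*} [MeasurableSpace Ω] (P : Measure Ω)
    (X U : Ω → (Fin p → ℝ)) (hX : Measurable X) (hU : Measurable U)
    (hXU : ProbabilityTheory.IndepFun X U P)
    (hXlaw : IsMultivariateGaussian (P.map X) μ Sig)
    (hUlaw : IsMultivariateGaussian (P.map U) 0 1) (a b : Fin p → ℝ) :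
    Measure.map (fun ω => a ⬝ᵥ X ω +
        b ⬝ᵥ (μ + (1 - S * Sig⁻¹) *ᵥ (X ω - μ) + L *ᵥ (U ω))) P =
      ProbabilityTheory.gaussianReal ((a + b) ⬝ᵥ μ)
        (Real.toNNReal ((a + b) ⬝ᵥ Sig *ᵥ (a + b) - 2 * (a ⬝ᵥ S *ᵥ b))) := by
  set w := b ᵥ* (1 - S * Sig⁻¹) with hw
  have mdot : ∀ c : Fin p → ℝ, Measurable fun x : Fin p → ℝ => ∑ i, c i * x i := fun c => by
    fun_prop
  have e1 := hXlaw.2 (a + w)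
  rw [Measure.map_map (mdot _) hX] at e1
  have e2 := hUlaw.2 (b ᵥ* L)
  rw [Measure.map_map (mdot _) hU] at e2
  have ind := hXU.comp (mdot (a + w)) (mdot (b ᵥ* L))
  have e3 := ProbabilityTheory.gaussianReal_add_gaussianReal_of_indepFun ind e1 e2
  have hfun : (fun ω => a ⬝ᵥ X ω + b ⬝ᵥ (μ + (1 - S * Sig⁻¹) *ᵥ (X ω - μ) + L *ᵥ (U ω))) =
      (fun y : ℝ => y + (b ⬝ᵥ μ - w ⬝ᵥ μ)) ∘
        (((fun x : Fin p → ℝ => ∑ i, (a + w) i * x i) ∘ X) +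
          ((fun x : Fin p → ℝ => ∑ i, (b ᵥ* L) i * x i) ∘ U)) := by
    funext ω
    change _ = (a + w) ⬝ᵥ X ω + (b ᵥ* L) ⬝ᵥ U ω + (b ⬝ᵥ μ - w ⬝ᵥ μ)
    rw [dotProduct_add, dotProduct_add, Matrix.dotProduct_mulVec, Matrix.dotProduct_mulVec, ← hw,
      dotProduct_sub, add_dotProduct]
    ring
  rw [hfun, ← Measure.map_map (by fun_prop)
    (((mdot _).comp hX).add ((mdot _).comp hU)), e3,
    ProbabilityTheory.gaussianReal_map_add_const, ← knockoff_quad Sig S L hSig hSpsd hL a b]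
  congr 1
  · change (a + w) ⬝ᵥ μ + (b ᵥ* L) ⬝ᵥ 0 + _ = _
    rw [dotProduct_zero, add_dotProduct, add_dotProduct]
    ring
  · rw [Matrix.one_mulVec, Real.toNNReal_add]
    · simpa using hSig.posSemidef.dotProduct_mulVec_nonneg (a + w)
    · exact Finset.sum_nonneg fun i _ => mul_self_nonneg _

theorem knockoffSwapFun_involutive {p : ℕ} (A : Finset (Fin p)) :
    Function.Involutive (knockoffSwapFun A) := by
  rintro (j | j) <;> by_cases h : j ∈ A <;> simp [knockoffSwapFun, h]

/-- **The Gaussian knockoff construction satisfies knockoff exchangeability.**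
Let `p` be a positive integer, `μ ∈ ℝ^p`, `Σ` a real symmetric positive definite
`p×p` matrix, `S` a real diagonal positive semidefinite `p×p` matrix with `2Σ − S`
positive semidefinite, and `L` a real `p×p` matrix with `L Lᵀ = 2S − S Σ⁻¹ S`.
Let `X` be a random vector in `ℝ^p` with the multivariate Gaussian distribution of
mean `μ` and covariance `Σ`, and `U` an independent standard Gaussian random vector
in `ℝ^p`.  Define `X̃ = μ + (I − SΣ⁻¹)(X − μ) + L U`.  Then for every subset
`A ⊆ {1, …, p}`, the random vector `(X, X̃)_{swap(A)}`, obtained from `(X, X̃)` by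
exchanging the `j`-th and `(p+j)`-th coordinates for every `j ∈ A`, has the same
distribution as `(X, X̃)`. -/
theorem gaussian_knockoff_exchangeability {p : ℕ} (hp : 0 < p)
    (μ : Fin p → ℝ) (Sig S L : Matrix (Fin p) (Fin p) ℝ)
    (hSig : Sig.PosDef) (hSdiag : S.IsDiag) (hSpsd : S.PosSemidef)
    (h2 : ((2 : ℝ) • Sig - S).PosSemidef)
    (hL : L * Lᵀ = (2 : ℝ) • S - S * Sig⁻¹ * S)
    {Ω : Type*} [MeasurableSpace Ω] (P : Measure Ω) [IsProbabilityMeasure P]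
    (X U : Ω → (Fin p → ℝ)) (hX : Measurable X) (hU : Measurable U)
    (hXU : ProbabilityTheory.IndepFun X U P)
    (hXlaw : IsMultivariateGaussian (P.map X) μ Sig)
    (hUlaw : IsMultivariateGaussian (P.map U) 0 1)
    (Xt : Ω → (Fin p → ℝ))
    (hXt : Xt = fun ω => μ + (1 - S * Sig⁻¹).mulVec (X ω - μ) + L.mulVec (U ω))
    (A : Finset (Fin p)) :
    Measure.map (fun ω => (Sum.elim (X ω) (Xt ω)) ∘ knockoffSwapFun A) P =
      Measure.map (fun ω => Sum.elim (X ω) (Xt ω)) P := by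
  have hXtm : Measurable Xt := by
    rw [hXt]
    refine (measurable_const.add ?_).add ?_
    · exact (Continuous.matrix_mulVec continuous_const continuous_id).measurable.comp
        (hX.sub measurable_const)
    · exact (Continuous.matrix_mulVec continuous_const continuous_id).measurable.comp hU
  have hZ : Measurable fun ω => Sum.elim (X ω) (Xt ω) := by
    refine measurable_pi_lambda _ ?_
    rintro (j | j)
    · exact (measurable_pi_apply j).comp hX
    · exact (measurable_pi_apply j).comp hXtm
  have hZA : Measurable fun ω => (Sum.elim (X ω) (Xt ω)) ∘ knockoffSwapFun A :=
    measurable_pi_lambda _ fun k => (measurable_pi_apply (knockoffSwapFun A k)).comp hZ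
  have : IsProbabilityMeasure (Measure.map (fun ω => Sum.elim (X ω) (Xt ω)) P) :=
    Measure.isProbabilityMeasure_map hZ.aemeasurable
  have : IsProbabilityMeasure
      (Measure.map (fun ω => (Sum.elim (X ω) (Xt ω)) ∘ knockoffSwapFun A) P) :=
    Measure.isProbabilityMeasure_map hZA.aemeasurable
  refine Measure.ext_of_charFunDual (funext fun ℓ => ?_)
  rw [charFunDual_eq_charFun_map_one, charFunDual_eq_charFun_map_one,
    Measure.map_map (by fun_prop) hZ, Measure.map_map (by fun_prop) hZA]
  congr 1
  -- coefficients of the functional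
  let c : Fin p ⊕ Fin p → ℝ := fun k => ℓ (Pi.single k 1)
  have hℓ : ∀ z, ℓ z = ∑ k, c k * z k := fun z => by
    conv_lhs => rw [pi_eq_sum_univ' z]
    simp only [map_sum, map_smul, smul_eq_mul, c]
    exact Finset.sum_congr rfl fun k _ => mul_comm _ _
  let c' : Fin p ⊕ Fin p → ℝ := c ∘ knockoffSwapFun A
  have e1 : (⇑ℓ ∘ fun ω => Sum.elim (X ω) (Xt ω)) =
      fun ω => (c ∘ Sum.inl) ⬝ᵥ X ω + (c ∘ Sum.inr) ⬝ᵥ Xt ω := by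
    funext ω
    simp [hℓ, Fintype.sum_sum_type, dotProduct]
  have e2 : (⇑ℓ ∘ fun ω => (Sum.elim (X ω) (Xt ω)) ∘ knockoffSwapFun A) =
      fun ω => (c' ∘ Sum.inl) ⬝ᵥ X ω + (c' ∘ Sum.inr) ⬝ᵥ Xt ω := by
    funext ω
    have : ∑ k, c k * Sum.elim (X ω) (Xt ω) (knockoffSwapFun A k) =
        ∑ k, c' k * Sum.elim (X ω) (Xt ω) k := by
      refine Fintype.sum_equiv (knockoffSwapFun_involutive A).toPerm _ _ fun k => ?_
      simp [c', (knockoffSwapFun_involutive A) k]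
    simp only [Function.comp_apply, hℓ, this, Fintype.sum_sum_type, dotProduct, Sum.elim_inl,
      Sum.elim_inr]
  rw [e1, e2, hXt]
  rw [knockoff_law μ Sig S L hSig hSpsd hL P X U hX hU hXU hXlaw hUlaw,
    knockoff_law μ Sig S L hSig hSpsd hL P X U hX hU hXU hXlaw hUlaw]
  have hsum : c' ∘ Sum.inl + c' ∘ Sum.inr = c ∘ Sum.inl + c ∘ Sum.inr := by
    funext j
    by_cases h : j ∈ A <;> simp [c', knockoffSwapFun, h, add_comm]
  have hprod : (c' ∘ Sum.inl) ⬝ᵥ S *ᵥ (c' ∘ Sum.inr) = (c ∘ Sum.inl) ⬝ᵥ S *ᵥ (c ∘ Sum.inr) := by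
    rw [← hSdiag.diagonal_diag]
    simp only [dotProduct, Matrix.mulVec_diagonal]
    refine Finset.sum_congr rfl fun j _ => ?_
    by_cases h : j ∈ A <;> simp [c', knockoffSwapFun, h]
    ring
  rw [hsum, hprod]
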